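/- arXiv:1901.02734 — 3 statements merged into one kernel-verified Lean document; each statement's English description precedes it below -/
import Mathlib

section
/- Let N ≥ 1 be an integer, R > 0, let a, ψ : [0,R] → ℝ be continuous with ψ ≥ 0 and with ∫₀^R e^{a(r)}ψ(r)^{N−1} dr > 0, and write w(r) = e^{a(r)}ψ(r)^{N−1}. Let λ > 0, 0 < t < 2 + √6, and let u : [0,R] → ℝ be continuously differentiable, nonincreasing, with 0 ≤ u(r) < 1 for every r ∈ [0,R] and u(R) = 0. Assume the semistability condition (for every C¹ function ξ with ξ(R) = 0, ∫₀^R w(ξ')² dr ≥ 2λ∫₀^R w(1−u)^{−3}ξ² dr), the weak-solution condition (for every C¹ function φ with φ(R) = 0, ∫₀^R w u'φ' dr = λ∫₀^R w(1−u)^{−2}φ dr), and that there is K ≥ 0 with u(0) − u(r) ≤ K r for all r ∈ [0,R]. Then sup_{[0,R]} u = u(0) ≤ 1 + KR − ((2+4t−t²)/(4(2t+1)))^{1/t}. -/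
open MeasureTheory Real intervalIntegral

/-!
Write `v = 1 - u`. Testing semistability with `ξ = v⁻ᵗ - 1` and the equation with
`φ = v⁻⁽²ᵗ⁺¹⁾ - 1` produces the same gradient term `∫ w v⁻²ᵗ⁻² (u')²`, up to the factor
`t² / (2t + 1)`. Eliminating it leaves `c ∫ w v⁻⁽²ᵗ⁺³⁾ ≤ ∫ w v⁻⁽ᵗ⁺³⁾`, where
`c = (2 + 4t - t²) / (4 (2t + 1))` is positive exactly when `t < 2 + √6`. The right-hand side has
the smaller exponent, so Young's inequality absorbs it: `∫ w v⁻⁽²ᵗ⁺³⁾ ≤ c ^ (-(2t + 3) / t) ∫ w`.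
Since `v r ≤ 1 - u 0 + K r ≤ 1 - u 0 + K R`, the left-hand side is at least
`(1 - u 0 + K R)⁻⁽²ᵗ⁺³⁾ ∫ w`, and comparing the two bounds gives the claim.
-/

open Set Filter
open scoped Topology Manifold ContDiff

section Extension

variable {E F : Type*} [NormedAddCommGroup E] [NormedSpace ℝ E] [FiniteDimensional ℝ E]
  [NormedAddCommGroup F] [NormedSpace ℝ F]

lemma exists_contDiff_eventuallyEq_nhdsSet {n : ℕ∞} {s U : Set E} {f : E → F} (hs : IsClosed s)
    (hU : IsOpen U) (hsU : s ⊆ U) (hf : ContDiffOn ℝ n f U) :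
    ∃ g : E → F, ContDiff ℝ n g ∧ g =ᶠ[𝓝ˢ s] f := by
  obtain ⟨χ, hχ_zero, hχ_one, -⟩ := exists_contMDiffMap_zero_one_nhds_of_isClosed (n := n)
    𝓘(ℝ, E) hU.isClosed_compl hs (disjoint_compl_left_iff_subset.2 hsU)
  refine ⟨fun x ↦ χ x • f x, contDiff_iff_contDiffAt.2 fun x ↦ ?_, ?_⟩
  · by_cases hx : x ∈ U
    · exact χ.contMDiff.contDiff.contDiffAt.smul (hf.contDiffAt (hU.mem_nhds hx))
    · have hχ_near : ∀ᶠ y in 𝓝 x, χ y = 0 := hχ_zero.filter_mono (nhds_le_nhdsSet hx)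
      refine (contDiffAt_const (c := (0 : F))).congr_of_eventuallyEq ?_
      filter_upwards [hχ_near] with y hy using by rw [hy, zero_smul]
  · filter_upwards [hχ_one] with x hx using by rw [hx, one_smul]

end Extension

lemma rpow_le_mul_add_mul_rpow {c x θ : ℝ} (hc : 0 < c) (hx : 0 ≤ x) (hθ : 0 ≤ θ) (hθ' : θ < 1) :
    x ^ θ ≤ θ * (c * x) + (1 - θ) * c ^ (-(θ / (1 - θ))) := by
  have hθ_sub : 0 < 1 - θ := sub_pos.2 hθ'
  have hfactor : (c * x) ^ θ * (c ^ (-(θ / (1 - θ)))) ^ (1 - θ) = x ^ θ := by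
    rw [mul_rpow hc.le hx, ← rpow_mul hc.le, neg_mul, div_mul_cancel₀ _ hθ_sub.ne', rpow_neg hc.le,
      mul_right_comm, mul_inv_cancel₀ (rpow_pos_of_pos hc θ).ne', one_mul]
  rw [← hfactor]
  exact geom_mean_le_arith_mean2_weighted hθ hθ_sub.le (mul_nonneg hc.le hx)
    (rpow_nonneg hc.le _) (add_sub_cancel _ _)

lemma rpow_one_div_le_of_rpow_neg_le {c M q t : ℝ} (hc : 0 < c) (hM : 0 < M) (hq : 0 < q)
    (h : M ^ (-q) ≤ c ^ (-(q / t))) : c ^ (1 / t) ≤ M := by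
  have hpow : M ^ (-q) ≤ (c ^ (1 / t)) ^ (-q) := by
    rwa [← rpow_mul hc.le, one_div_mul_eq_div, neg_div]
  exact (rpow_le_rpow_iff_of_neg hM (rpow_pos_of_pos hc _) (neg_lt_zero.2 hq)).1 hpow

lemma integral_mul_le_of_mul_integral_le_integral_rpow {α : Type*} [MeasurableSpace α]
    {μ : Measure α} {w g : α → ℝ} {c θ : ℝ} (hw : 0 ≤ᵐ[μ] w) (hg : 0 ≤ᵐ[μ] g)
    (hw_int : Integrable w μ) (hwg_int : Integrable (fun x ↦ w x * g x) μ)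
    (hwgθ_int : Integrable (fun x ↦ w x * g x ^ θ) μ)
    (hc : 0 < c) (hθ : 0 ≤ θ) (hθ' : θ < 1)
    (h : c * ∫ x, w x * g x ∂μ ≤ ∫ x, w x * g x ^ θ ∂μ) :
    ∫ x, w x * g x ∂μ ≤ c ^ (-(1 / (1 - θ))) * ∫ x, w x ∂μ := by
  set b := c ^ (-(θ / (1 - θ))) with hb
  have hθ_sub : 0 < 1 - θ := sub_pos.2 hθ'
  have hyoung : ∫ x, w x * g x ^ θ ∂μ ≤ θ * c * ∫ x, w x * g x ∂μ + (1 - θ) * b * ∫ x, w x ∂μ := by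
    rw [← MeasureTheory.integral_const_mul, ← MeasureTheory.integral_const_mul,
      ← MeasureTheory.integral_add (hwg_int.const_mul _) (hw_int.const_mul _)]
    refine integral_mono_ae hwgθ_int ((hwg_int.const_mul _).add (hw_int.const_mul _)) ?_
    filter_upwards [hw, hg] with x hwx hgx
    calc w x * g x ^ θ ≤ w x * (θ * (c * g x) + (1 - θ) * b) :=
          mul_le_mul_of_nonneg_left (rpow_le_mul_add_mul_rpow hc hgx hθ hθ') hwx
      _ = θ * c * (w x * g x) + (1 - θ) * b * w x := by ring
  have habsorb : c * ∫ x, w x * g x ∂μ ≤ b * ∫ x, w x ∂μ :=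
    le_of_mul_le_mul_left (by linarith) hθ_sub
  have hpow : c ^ (-(1 / (1 - θ))) = c⁻¹ * b := by
    rw [hb, ← rpow_neg_one, ← rpow_add hc]
    congr 1
    field_simp
    ring
  rwa [hpow, mul_assoc, le_inv_mul_iff₀ hc]

section Interval

variable {w f g : ℝ → ℝ} {a b : ℝ}

lemma integral_mul_mono_on (hab : a ≤ b) (hw : IntervalIntegrable w volume a b)
    (hw0 : ∀ r ∈ Icc a b, 0 ≤ w r) (hf : ContinuousOn f (Icc a b)) (hg : ContinuousOn g (Icc a b))
    (hfg : ∀ r ∈ Icc a b, f r ≤ g r) :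
    ∫ r in a..b, w r * f r ≤ ∫ r in a..b, w r * g r := by
  rw [← uIcc_of_le hab] at hf hg
  exact integral_mono_on hab (hw.mul_continuousOn hf) (hw.mul_continuousOn hg)
    fun r hr ↦ mul_le_mul_of_nonneg_left (hfg r hr) (hw0 r hr)

lemma integral_mul_rpow_neg_anti_on {q : ℝ} (hab : a ≤ b) (hw : IntervalIntegrable w volume a b)
    (hw0 : ∀ r ∈ Icc a b, 0 ≤ w r) (hq : 0 ≤ q) (hf : ContinuousOn f (Icc a b))
    (hg : ContinuousOn g (Icc a b)) (hf0 : ∀ r ∈ Icc a b, 0 < f r)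
    (hfg : ∀ r ∈ Icc a b, f r ≤ g r) :
    ∫ r in a..b, w r * g r ^ (-q) ≤ ∫ r in a..b, w r * f r ^ (-q) :=
  integral_mul_mono_on hab hw hw0
    (hg.rpow_const fun r hr ↦ .inl ((hf0 r hr).trans_le (hfg r hr)).ne')
    (hf.rpow_const fun r hr ↦ .inl (hf0 r hr).ne')
    fun r hr ↦ rpow_le_rpow_of_nonpos (hf0 r hr) (hfg r hr) (neg_nonpos.2 hq)

lemma integral_mul_sub_mul (hab : a ≤ b) (hw : IntervalIntegrable w volume a b)
    (hf : ContinuousOn f (Icc a b)) (hg : ContinuousOn g (Icc a b)) (α β : ℝ) :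
    ∫ r in a..b, w r * (α * f r - β * g r) =
      α * (∫ r in a..b, w r * f r) - β * ∫ r in a..b, w r * g r := by
  rw [← uIcc_of_le hab] at hf hg
  rw [← intervalIntegral.integral_const_mul, ← intervalIntegral.integral_const_mul,
    ← intervalIntegral.integral_sub ((hw.mul_continuousOn hf).const_mul α)
      ((hw.mul_continuousOn hg).const_mul β)]
  simp only [mul_sub, mul_left_comm]

lemma intervalIntegral_mul_le_of_mul_integral_le_integral_rpow {c θ : ℝ} (hab : a ≤ b)
    (hw : IntervalIntegrable w volume a b) (hw0 : ∀ r ∈ Icc a b, 0 ≤ w r)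
    (hf : ContinuousOn f (Icc a b)) (hf0 : ∀ r ∈ Icc a b, 0 ≤ f r)
    (hc : 0 < c) (hθ : 0 ≤ θ) (hθ' : θ < 1)
    (h : c * ∫ r in a..b, w r * f r ≤ ∫ r in a..b, w r * f r ^ θ) :
    ∫ r in a..b, w r * f r ≤ c ^ (-(1 / (1 - θ))) * ∫ r in a..b, w r := by
  have hae {p : ℝ → Prop} (hp : ∀ r ∈ Icc a b, p r) : ∀ᵐ r ∂volume.restrict (Ioc a b), p r :=
    ae_restrict_of_forall_mem measurableSet_Ioc fun r hr ↦ hp r (Ioc_subset_Icc_self hr)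
  have hfθ : ContinuousOn (fun r ↦ f r ^ θ) (Icc a b) := hf.rpow_const fun _ _ ↦ .inr hθ
  rw [← uIcc_of_le hab] at hf hfθ
  simp only [integral_of_le hab] at h ⊢
  exact integral_mul_le_of_mul_integral_le_integral_rpow (hae hw0) (hae hf0) hw.1
    (hw.mul_continuousOn hf).1 (hw.mul_continuousOn hfθ).1 hc hθ hθ' h

end Interval

/-- The weak form of `-(w u')' = lam * w * (1 - u)⁻²` on `(0, R)`. Test functions vanish at `R`
only, which encodes the natural (Neumann) condition at the pole `0`. -/
def IsMEMSWeakSolution (w u : ℝ → ℝ) (lam R : ℝ) : Prop :=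
  ∀ φ : ℝ → ℝ, ContDiff ℝ 1 φ → φ R = 0 →
    ∫ r in (0 : ℝ)..R, w r * deriv u r * deriv φ r =
      lam * ∫ r in (0 : ℝ)..R, w r * (1 - u r) ^ (-(2 : ℝ)) * φ r

/-- Semistability of `u`: nonnegativity of the second variation at `u` of the energy associated
with `-(w u')' = lam * w * (1 - u)⁻²`, whose linearised reaction term is `2 * lam * (1 - u)⁻³`. -/
def IsMEMSSemistable (w u : ℝ → ℝ) (lam R : ℝ) : Prop :=
  ∀ ξ : ℝ → ℝ, ContDiff ℝ 1 ξ → ξ R = 0 →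
    2 * lam * ∫ r in (0 : ℝ)..R, w r * (1 - u r) ^ (-(3 : ℝ)) * (ξ r) ^ 2 ≤
      ∫ r in (0 : ℝ)..R, w r * (deriv ξ r) ^ 2

/-- The constant `c` in the estimate `c ∫ w (1 - u)⁻⁽²ᵗ⁺³⁾ ≤ ∫ w (1 - u)⁻⁽ᵗ⁺³⁾` satisfied by
semistable solutions; the reciprocal of the paper's `4 (2t + 1) / (2 + 4t - t²)`. -/
noncomputable def memsConst (t : ℝ) : ℝ := (2 + 4 * t - t ^ 2) / (4 * (2 * t + 1))

lemma memsConst_pos {t : ℝ} (ht : 0 < t) (ht' : t < 2 + √6) : 0 < memsConst t := by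
  have hsqrt : √6 ^ 2 = 6 := sq_sqrt (by norm_num)
  have hsqrt_gt : 2 < √6 := lt_sqrt_of_sq_lt (by norm_num)
  have hnum : 0 < 2 + 4 * t - t ^ 2 := by
    nlinarith [mul_pos (sub_pos.2 ht') (by linarith : 0 < t - 2 + √6)]
  exact div_pos hnum (by linarith)

lemma four_mul_memsConst {t : ℝ} (ht : 2 * t + 1 ≠ 0) :
    4 * memsConst t = 2 - t ^ 2 / (2 * t + 1) := by
  unfold memsConst
  field_simp
  ring

section TestFunctions

variable {w u : ℝ → ℝ} {lam R : ℝ} {U : Set ℝ}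

lemma exists_contDiff_eqOn_Icc {f : ℝ → ℝ} {a b : ℝ} (hU : IsOpen U) (hsub : Icc a b ⊆ U)
    (hf : ContDiffOn ℝ 1 f U) :
    ∃ g : ℝ → ℝ, ContDiff ℝ 1 g ∧ EqOn g f (Icc a b) ∧ EqOn (deriv g) (deriv f) (Icc a b) := by
  obtain ⟨g, hg, hgf⟩ := exists_contDiff_eventuallyEq_nhdsSet (n := 1) isClosed_Icc hU hsub hf
  have hgf_near : ∀ r ∈ Icc a b, g =ᶠ[𝓝 r] f := fun r hr ↦ hgf.filter_mono (nhds_le_nhdsSet hr)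
  exact ⟨g, hg, fun r hr ↦ (hgf_near r hr).eq_of_nhds, fun r hr ↦ (hgf_near r hr).deriv_eq⟩

lemma IsMEMSWeakSolution.integral_eq_of_contDiffOn (hweak : IsMEMSWeakSolution w u lam R)
    (hR : 0 ≤ R) (hU : IsOpen U) (hsub : Icc 0 R ⊆ U) {φ : ℝ → ℝ} (hφ : ContDiffOn ℝ 1 φ U)
    (hφR : φ R = 0) :
    ∫ r in (0 : ℝ)..R, w r * deriv u r * deriv φ r =
      lam * ∫ r in (0 : ℝ)..R, w r * (1 - u r) ^ (-(2 : ℝ)) * φ r := by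
  obtain ⟨g, hg, hg_eq, hg_deriv⟩ := exists_contDiff_eqOn_Icc hU hsub hφ
  have hmem {r : ℝ} (hr : r ∈ uIcc 0 R) : r ∈ Icc 0 R := uIcc_of_le hR ▸ hr
  convert hweak g hg ((hg_eq (right_mem_Icc.2 hR)).trans hφR) using 1
  · exact intervalIntegral.integral_congr fun r hr ↦ by simp only [hg_deriv (hmem hr)]
  · congr 1
    exact intervalIntegral.integral_congr fun r hr ↦ by simp only [hg_eq (hmem hr)]

lemma IsMEMSSemistable.integral_le_of_contDiffOn (hstab : IsMEMSSemistable w u lam R)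
    (hR : 0 ≤ R) (hU : IsOpen U) (hsub : Icc 0 R ⊆ U) {ξ : ℝ → ℝ} (hξ : ContDiffOn ℝ 1 ξ U)
    (hξR : ξ R = 0) :
    2 * lam * ∫ r in (0 : ℝ)..R, w r * (1 - u r) ^ (-(3 : ℝ)) * (ξ r) ^ 2 ≤
      ∫ r in (0 : ℝ)..R, w r * (deriv ξ r) ^ 2 := by
  obtain ⟨g, hg, hg_eq, hg_deriv⟩ := exists_contDiff_eqOn_Icc hU hsub hξ
  have hmem {r : ℝ} (hr : r ∈ uIcc 0 R) : r ∈ Icc 0 R := uIcc_of_le hR ▸ hr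
  convert hstab g hg ((hg_eq (right_mem_Icc.2 hR)).trans hξR) using 1
  · congr 1
    exact intervalIntegral.integral_congr fun r hr ↦ by simp only [hg_eq (hmem hr)]
  · exact intervalIntegral.integral_congr fun r hr ↦ by simp only [hg_deriv (hmem hr)]

lemma contDiffOn_one_sub_rpow_sub_one (hu : ContDiff ℝ 1 u) (q : ℝ) :
    ContDiffOn ℝ 1 (fun r ↦ (1 - u r) ^ q - 1) {r | u r < 1} :=
  ((contDiff_const.sub hu).contDiffOn.rpow_const_of_ne
    fun _ hr ↦ (sub_pos.2 hr).ne').sub contDiffOn_const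

lemma deriv_one_sub_rpow_neg_sub_one {r : ℝ} (hu : DifferentiableAt ℝ u r) (hr : u r < 1)
    (p : ℝ) :
    deriv (fun s ↦ (1 - u s) ^ (-p) - 1) r = p * (1 - u r) ^ (-p - 1) * deriv u r := by
  have hderiv := ((hu.hasDerivAt.const_sub 1).rpow_const (p := -p)
    (.inl (sub_pos.2 hr).ne')).sub_const 1
  rw [hderiv.deriv]
  ring

lemma continuousOn_one_sub_rpow {s : Set ℝ} (hu : ContinuousOn u s) (hu1 : ∀ r ∈ s, u r < 1)
    (q : ℝ) : ContinuousOn (fun r ↦ (1 - u r) ^ q) s :=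
  (continuousOn_const.sub hu).rpow_const fun r hr ↦ .inl (sub_pos.2 (hu1 r hr)).ne'

end TestFunctions

section Estimates

variable {w u : ℝ → ℝ} {lam t R K : ℝ}

lemma integral_mul_deriv_sq_eq_mul_integral (hR : 0 ≤ R) (ht : 2 * t + 1 ≠ 0)
    (hu : Differentiable ℝ u) (hu1 : ∀ r ∈ Icc 0 R, u r < 1) :
    ∫ r in (0 : ℝ)..R, w r * (deriv (fun s ↦ (1 - u s) ^ (-t) - 1) r) ^ 2 =
      t ^ 2 / (2 * t + 1) *
        ∫ r in (0 : ℝ)..R, w r * deriv u r * deriv (fun s ↦ (1 - u s) ^ (-(2 * t + 1)) - 1) r := by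
  rw [← intervalIntegral.integral_const_mul]
  refine intervalIntegral.integral_congr fun r hr ↦ ?_
  have hr1 : u r < 1 := hu1 r (uIcc_of_le hR ▸ hr)
  have hpow : (1 - u r) ^ (-(2 * t + 1) - 1) = ((1 - u r) ^ (-t - 1)) ^ 2 := by
    rw [← rpow_mul_natCast (sub_pos.2 hr1).le]
    congr 1
    push_cast
    ring
  simp only [deriv_one_sub_rpow_neg_sub_one (hu r) hr1, hpow]
  rw [div_mul_eq_mul_div, eq_div_iff ht]
  ring

lemma two_mul_integral_le_of_isMEMSSemistable (hR : 0 ≤ R) (hlam : 0 < lam) (ht : 2 * t + 1 ≠ 0)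
    (hu : ContDiff ℝ 1 u) (hu1 : ∀ r ∈ Icc 0 R, u r < 1) (huR : u R = 0)
    (hstab : IsMEMSSemistable w u lam R) (hweak : IsMEMSWeakSolution w u lam R) :
    2 * ∫ r in (0 : ℝ)..R, w r * ((1 - u r) ^ (-(3 : ℝ)) * ((1 - u r) ^ (-t) - 1) ^ 2) ≤
      t ^ 2 / (2 * t + 1) *
        ∫ r in (0 : ℝ)..R, w r * ((1 - u r) ^ (-(2 : ℝ)) * ((1 - u r) ^ (-(2 * t + 1)) - 1)) := by
  have hU : IsOpen {r | u r < 1} := isOpen_lt hu.continuous continuous_const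
  have hstab_test := hstab.integral_le_of_contDiffOn hR hU hu1
    (contDiffOn_one_sub_rpow_sub_one hu (-t)) (by simp [huR])
  have hweak_test := hweak.integral_eq_of_contDiffOn hR hU hu1
    (contDiffOn_one_sub_rpow_sub_one hu (-(2 * t + 1))) (by simp [huR])
  rw [integral_mul_deriv_sq_eq_mul_integral hR ht (hu.differentiable one_ne_zero) hu1,
    hweak_test] at hstab_test
  simp only [← mul_assoc]
  exact le_of_mul_le_mul_left (by linarith) hlam

lemma four_mul_memsConst_mul_rpow_sub_le {v : ℝ} (hv : 0 < v) (ht : 0 < 2 * t + 1) :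
    4 * memsConst t * v ^ (-(2 * t + 3)) - 4 * v ^ (-(t + 3)) ≤
      2 * (v ^ (-(3 : ℝ)) * (v ^ (-t) - 1) ^ 2) -
        t ^ 2 / (2 * t + 1) * (v ^ (-(2 : ℝ)) * (v ^ (-(2 * t + 1)) - 1)) := by
  have hpow_mixed : v ^ (-(t + 3)) = v ^ (-(3 : ℝ)) * v ^ (-t) := by
    rw [← rpow_add hv]; ring_nf
  have hpow_sq : v ^ (-(2 * t + 3)) = v ^ (-(3 : ℝ)) * (v ^ (-t)) ^ 2 := by
    rw [← rpow_mul_natCast hv.le, ← rpow_add hv]; push_cast; ring_nf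
  have hpow_eq : v ^ (-(2 : ℝ)) * v ^ (-(2 * t + 1)) = v ^ (-(3 : ℝ)) * (v ^ (-t)) ^ 2 := by
    rw [← hpow_sq, ← rpow_add hv]; ring_nf
  have hdropped : 0 ≤ 2 * v ^ (-(3 : ℝ)) + t ^ 2 / (2 * t + 1) * v ^ (-(2 : ℝ)) := by positivity
  linear_combination hdropped + v ^ (-(2 * t + 3)) * four_mul_memsConst ht.ne'
    - 4 * hpow_mixed + (2 - t ^ 2 / (2 * t + 1)) * hpow_sq + t ^ 2 / (2 * t + 1) * hpow_eq

lemma memsConst_mul_integral_le (hR : 0 ≤ R) (hw : IntervalIntegrable w volume 0 R)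
    (hw0 : ∀ r ∈ Icc 0 R, 0 ≤ w r) (hlam : 0 < lam) (ht : 0 < 2 * t + 1)
    (hu : ContDiff ℝ 1 u) (hu1 : ∀ r ∈ Icc 0 R, u r < 1) (huR : u R = 0)
    (hstab : IsMEMSSemistable w u lam R) (hweak : IsMEMSWeakSolution w u lam R) :
    memsConst t * ∫ r in (0 : ℝ)..R, w r * (1 - u r) ^ (-(2 * t + 3)) ≤
      ∫ r in (0 : ℝ)..R, w r * (1 - u r) ^ (-(t + 3)) := by
  have hpow := continuousOn_one_sub_rpow hu.continuous.continuousOn hu1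
  have hstab_cont : ContinuousOn
      (fun r ↦ (1 - u r) ^ (-(3 : ℝ)) * ((1 - u r) ^ (-t) - 1) ^ 2) (Icc 0 R) :=
    (hpow _).mul (((hpow _).sub continuousOn_const).pow 2)
  have hweak_cont : ContinuousOn
      (fun r ↦ (1 - u r) ^ (-(2 : ℝ)) * ((1 - u r) ^ (-(2 * t + 1)) - 1)) (Icc 0 R) :=
    (hpow _).mul ((hpow _).sub continuousOn_const)
  have hpointwise :
      ∫ r in (0 : ℝ)..R, w r *
        (4 * memsConst t * (1 - u r) ^ (-(2 * t + 3)) - 4 * (1 - u r) ^ (-(t + 3))) ≤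
      ∫ r in (0 : ℝ)..R, w r *
        (2 * ((1 - u r) ^ (-(3 : ℝ)) * ((1 - u r) ^ (-t) - 1) ^ 2) -
          t ^ 2 / (2 * t + 1) * ((1 - u r) ^ (-(2 : ℝ)) * ((1 - u r) ^ (-(2 * t + 1)) - 1))) :=
    integral_mul_mono_on hR hw hw0
      ((continuousOn_const.mul (hpow _)).sub (continuousOn_const.mul (hpow _)))
      ((continuousOn_const.mul hstab_cont).sub (continuousOn_const.mul hweak_cont))
      fun r hr ↦ four_mul_memsConst_mul_rpow_sub_le (sub_pos.2 (hu1 r hr)) ht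
  rw [integral_mul_sub_mul hR hw (hpow _) (hpow _),
    integral_mul_sub_mul hR hw hstab_cont hweak_cont] at hpointwise
  linarith [two_mul_integral_le_of_isMEMSSemistable hR hlam ht.ne' hu hu1 huR hstab hweak]

lemma integral_mul_one_sub_rpow_le (hR : 0 ≤ R) (hw : IntervalIntegrable w volume 0 R)
    (hw0 : ∀ r ∈ Icc 0 R, 0 ≤ w r) (hlam : 0 < lam) (ht : 0 < t) (ht' : t < 2 + √6)
    (hu : ContDiff ℝ 1 u) (hu1 : ∀ r ∈ Icc 0 R, u r < 1) (huR : u R = 0)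
    (hstab : IsMEMSSemistable w u lam R) (hweak : IsMEMSWeakSolution w u lam R) :
    ∫ r in (0 : ℝ)..R, w r * (1 - u r) ^ (-(2 * t + 3)) ≤
      memsConst t ^ (-((2 * t + 3) / t)) * ∫ r in (0 : ℝ)..R, w r := by
  set θ := (t + 3) / (2 * t + 3) with hθ
  have hθ_lt : θ < 1 := (div_lt_one (by linarith)).2 (by linarith)
  have hexp : 1 / (1 - θ) = (2 * t + 3) / t := by
    rw [hθ, one_sub_div (by linarith), one_div_div]
    ring_nf
  have hpowθ : ∀ r ∈ Icc 0 R, ((1 - u r) ^ (-(2 * t + 3))) ^ θ = (1 - u r) ^ (-(t + 3)) := by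
    intro r hr
    rw [← rpow_mul (sub_pos.2 (hu1 r hr)).le, neg_mul, mul_div_cancel₀ _ (by linarith)]
  have henergy : memsConst t * ∫ r in (0 : ℝ)..R, w r * (1 - u r) ^ (-(2 * t + 3)) ≤
      ∫ r in (0 : ℝ)..R, w r * ((1 - u r) ^ (-(2 * t + 3))) ^ θ := by
    refine (memsConst_mul_integral_le hR hw hw0 hlam (by linarith) hu hu1 huR hstab hweak).trans_eq
      (intervalIntegral.integral_congr fun r hr ↦ ?_)
    simp only [hpowθ r (uIcc_of_le hR ▸ hr)]
  rw [← hexp]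
  exact intervalIntegral_mul_le_of_mul_integral_le_integral_rpow hR hw hw0
    (continuousOn_one_sub_rpow hu.continuous.continuousOn hu1 _)
    (fun r hr ↦ rpow_nonneg (sub_pos.2 (hu1 r hr)).le _) (memsConst_pos ht ht') (by positivity)
    hθ_lt henergy

lemma integral_mul_oscillation_rpow_le (hR : 0 ≤ R) (hw : IntervalIntegrable w volume 0 R)
    (hw0 : ∀ r ∈ Icc 0 R, 0 ≤ w r) (hlam : 0 < lam) (ht : 0 < t) (ht' : t < 2 + √6)
    (hu : ContDiff ℝ 1 u) (hu1 : ∀ r ∈ Icc 0 R, u r < 1) (huR : u R = 0)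
    (hstab : IsMEMSSemistable w u lam R) (hweak : IsMEMSWeakSolution w u lam R)
    (hosc : ∀ r ∈ Icc 0 R, u 0 - u r ≤ K * r) :
    ∫ r in (0 : ℝ)..R, w r * (1 - u 0 + K * r) ^ (-(2 * t + 3)) ≤
      memsConst t ^ (-((2 * t + 3) / t)) * ∫ r in (0 : ℝ)..R, w r := by
  refine le_trans ?_ (integral_mul_one_sub_rpow_le hR hw hw0 hlam ht ht' hu hu1 huR hstab hweak)
  exact integral_mul_rpow_neg_anti_on hR hw hw0 (by linarith)
    (continuous_const.sub hu.continuous).continuousOn (by fun_prop)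
    (fun r hr ↦ sub_pos.2 (hu1 r hr)) fun r hr ↦ by linarith [hosc r hr]

end Estimates

theorem radial_mems_Linfty_bound_general {w u : ℝ → ℝ} {lam t R K : ℝ} (hR : 0 ≤ R)
    (hw : IntervalIntegrable w volume 0 R) (hw0 : ∀ r ∈ Icc 0 R, 0 ≤ w r)
    (hwint : 0 < ∫ r in (0 : ℝ)..R, w r) (hlam : 0 < lam) (ht : 0 < t) (ht' : t < 2 + √6)
    (hu : ContDiff ℝ 1 u) (hmax : IsMaxOn u (Icc 0 R) 0)
    (hu1 : ∀ r ∈ Icc 0 R, u r < 1) (huR : u R = 0)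
    (hstab : IsMEMSSemistable w u lam R) (hweak : IsMEMSWeakSolution w u lam R)
    (hK : 0 ≤ K) (hosc : ∀ r ∈ Icc 0 R, u 0 - u r ≤ K * r) :
    sSup (u '' Icc 0 R) = u 0 ∧
      u 0 ≤ 1 + K * R - ((2 + 4 * t - t ^ 2) / (4 * (2 * t + 1))) ^ (1 / t) := by
  have h0 : (0 : ℝ) ∈ Icc 0 R := left_mem_Icc.2 hR
  have hpos : ∀ r ∈ Icc 0 R, 0 < 1 - u 0 + K * r := fun r hr ↦
    add_pos_of_pos_of_nonneg (sub_pos.2 (hu1 0 h0)) (mul_nonneg hK hr.1)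
  have hpull : (1 - u 0 + K * R) ^ (-(2 * t + 3)) * ∫ r in (0 : ℝ)..R, w r ≤
      ∫ r in (0 : ℝ)..R, w r * (1 - u 0 + K * r) ^ (-(2 * t + 3)) := by
    rw [mul_comm, ← intervalIntegral.integral_mul_const]
    exact integral_mul_rpow_neg_anti_on hR hw hw0 (by linarith) (by fun_prop) continuousOn_const
      hpos fun r hr ↦ by gcongr; exact hr.2
  have hbound := hpull.trans
    (integral_mul_oscillation_rpow_le hR hw hw0 hlam ht ht' hu hu1 huR hstab hweak hosc)
  have hconst := rpow_one_div_le_of_rpow_neg_le (memsConst_pos ht ht')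
    (hpos R (right_mem_Icc.2 hR)) (by linarith) (le_of_mul_le_mul_right hbound hwint)
  refine ⟨IsGreatest.csSup_eq ⟨mem_image_of_mem u h0, forall_mem_image.2 hmax⟩, ?_⟩
  rw [← memsConst]
  linarith

theorem radial_mems_Linfty_bound
    (N : ℕ) (hN : 1 ≤ N) (R : ℝ) (hR : 0 < R)
    (a ψ : ℝ → ℝ) (ha : ContinuousOn a (Set.Icc 0 R))
    (hψ : ContinuousOn ψ (Set.Icc 0 R)) (hψ0 : ∀ r ∈ Set.Icc (0:ℝ) R, 0 ≤ ψ r)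
    (w : ℝ → ℝ) (hw : ∀ r, w r = exp (a r) * ψ r ^ (N - 1))
    (hwint : 0 < ∫ r in (0:ℝ)..R, w r)
    (lam t : ℝ) (hlam : 0 < lam) (ht : 0 < t) (ht' : t < 2 + Real.sqrt 6)
    (u : ℝ → ℝ) (hu : ContDiff ℝ 1 u) (hmono : AntitoneOn u (Set.Icc 0 R))
    (hu01 : ∀ r ∈ Set.Icc (0:ℝ) R, 0 ≤ u r ∧ u r < 1) (huR : u R = 0)
    (hstab : ∀ ξ : ℝ → ℝ, ContDiff ℝ 1 ξ → ξ R = 0 →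
      ∫ r in (0:ℝ)..R, w r * (deriv ξ r)^2 ≥
        2 * lam * ∫ r in (0:ℝ)..R, w r * (1 - u r) ^ (-(3:ℝ)) * (ξ r)^2)
    (hweak : ∀ φ : ℝ → ℝ, ContDiff ℝ 1 φ → φ R = 0 →
      ∫ r in (0:ℝ)..R, w r * deriv u r * deriv φ r =
        lam * ∫ r in (0:ℝ)..R, w r * (1 - u r) ^ (-(2:ℝ)) * φ r)
    (K : ℝ) (hK : 0 ≤ K) (hosc : ∀ r ∈ Set.Icc (0:ℝ) R, u 0 - u r ≤ K * r) :
    sSup (u '' Set.Icc 0 R) = u 0 ∧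
      u 0 ≤ 1 + K * R - ((2+4*t-t^2)/(4*(2*t+1))) ^ (1/t) := by
  obtain rfl : w = fun r ↦ exp (a r) * ψ r ^ (N - 1) := funext hw
  exact radial_mems_Linfty_bound_general hR.le
    (ContinuousOn.intervalIntegrable_of_Icc hR.le (by fun_prop))
    (fun r hr ↦ mul_nonneg (exp_pos _).le (pow_nonneg (hψ0 r hr) _)) hwint hlam ht ht' hu
    (fun r hr ↦ hmono (Set.left_mem_Icc.2 hR.le) hr hr.1) (fun r hr ↦ (hu01 r hr).2) huR
    hstab hweak hK hosc
end

section
/- Let N ≥ 1 be an integer, R > 0, let a, ψ : [0,R] → ℝ be continuous with ψ ≥ 0 and with ∫₀^R e^{a(r)}ψ(r)^{N−1} dr > 0, and write w(r) = e^{a(r)}ψ(r)^{N−1}. Let λ > 0, m > 1, b > 0, t > 0 with m − √(m(m−1)) < bt < m + √(m(m−1)), and let u : [0,R] → ℝ be continuously differentiable, nonincreasing, with u ≥ 0 and u(R) = 0. Assume the semistability condition (for every C¹ function ξ with ξ(R) = 0, ∫₀^R w(ξ')² dr ≥ λm∫₀^R w(1+u)^{m−1}ξ² dr), the weak-solution condition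 (for every C¹ function φ with φ(R) = 0, ∫₀^R w u'φ' dr = λ∫₀^R w(1+u)^m φ dr), and that there is K ≥ 0 with u(0) − u(r) ≤ K r for all r ∈ [0,R]. Then sup_{[0,R]} u = u(0) ≤ KR − 1 + [2m(2bt−1)/(m(2bt−1) − b²t²)]^{1/(bt)}. -/
open MeasureTheory Real intervalIntegral

/-!
Put `v = 1 + u` and `s = b * t`. Testing semi-stability with `v ^ s - 1` and the equation with
`v ^ (2 * s - 1) - 1` produces the same Dirichlet term `∫ w * v ^ (2 * s - 2) * u_r ^ 2`.
Eliminating it leaves a reverse Hölder inequality `∫ w * v ^ q ≤ C * ∫ w * v ^ (q - s)` with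
`q = 2 * s + m - 1` and `C = 2 * m * (2 * s - 1) / (m * (2 * s - 1) - s ^ 2)`; the window for `s`
is exactly what makes the denominator positive. Young's inequality absorbs the right-hand side and
gives `∫ w * v ^ q ≤ C ^ (q / s) * ∫ w`. A pointwise lower bound for `v` on an initial interval
`[0, ρ]` then turns this weighted `L^q` bound into a bound for `u 0`.
-/

/-- Semi-stability on `(0, R)` with respect to the radial weight `w`: the quadratic form
`ξ ↦ ∫ w * ξ_r ^ 2 - c * ∫ w * g * ξ ^ 2` is nonnegative on `C¹` functions vanishing at `R`. For the
equation `-(w * u_r)_r = λ * w * f(u)`, the potential `c * g` is `λ` times the derivative of `f`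
at `u`. -/
def RadialSemistable (w g : ℝ → ℝ) (c R : ℝ) : Prop :=
  ∀ ξ : ℝ → ℝ, ContDiff ℝ 1 ξ → ξ R = 0 →
    c * ∫ r in 0..R, w r * g r * (ξ r) ^ 2 ≤ ∫ r in 0..R, w r * (deriv ξ r) ^ 2

/-- Weak form of `-(w * u_r)_r = c * w * h` on `(0, R)`, tested against `C¹` functions vanishing at
`R`. Test functions are free at `0`, which encodes the Neumann condition there. -/
def RadialWeakSolution (w h u : ℝ → ℝ) (c R : ℝ) : Prop :=
  ∀ φ : ℝ → ℝ, ContDiff ℝ 1 φ → φ R = 0 →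
    ∫ r in 0..R, w r * deriv u r * deriv φ r = c * ∫ r in 0..R, w r * h r * φ r

lemma exists_contDiff_one_eqOn_Ici {f f' : ℝ → ℝ} {a : ℝ}
    (hf : ∀ x ∈ Set.Ici a, HasDerivWithinAt f (f' x) (Set.Ici a) x)
    (hf' : ContinuousOn f' (Set.Ici a)) :
    ∃ g : ℝ → ℝ, ContDiff ℝ 1 g ∧ Set.EqOn g f (Set.Ici a) ∧
      Set.EqOn (deriv g) f' (Set.Ici a) := by
  have hcont : Continuous fun y => f' (max y a) :=
    hf'.comp_continuous (by fun_prop) fun y => le_max_right y a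
  have hderiv (x : ℝ) :
      HasDerivAt (fun x => f a + ∫ y in a..x, f' (max y a)) (f' (max x a)) x :=
    (hcont.integral_hasStrictDerivAt a x).hasDerivAt.const_add _
  refine ⟨fun x => f a + ∫ y in a..x, f' (max y a), ?_, fun x hx => ?_, fun x hx => ?_⟩
  · refine contDiff_one_iff_deriv.2 ⟨fun x => (hderiv x).differentiableAt, ?_⟩
    rwa [funext fun x => (hderiv x).deriv]
  · have hftc : ∫ y in a..x, f' (max y a) = f x - f a := by
      refine integral_eq_sub_of_hasDerivAt_of_le hx
        (fun y hy => (hf y hy.1).continuousWithinAt.mono Set.Icc_subset_Ici_self)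
        (fun y hy => ?_) (hcont.intervalIntegrable _ _)
      rw [max_eq_left hy.1.le]
      exact (hf y hy.1.le).hasDerivAt (Ici_mem_nhds hy.1)
    simp only [hftc, add_sub_cancel]
  · rw [(hderiv x).deriv, max_eq_left hx]

-- `u` may drop below `-1` off `S`, where `(1 + u) ^ p` need not be `C¹`.
lemma exists_contDiff_one_eq_one_add_rpow_sub_one {u : ℝ → ℝ} {S : Set ℝ} (p : ℝ)
    (hu : ContDiff ℝ 1 u) (hu0 : ∀ r ∈ S, 0 ≤ u r) :
    ∃ ξ : ℝ → ℝ, ContDiff ℝ 1 ξ ∧ ∀ r ∈ S,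
      ξ r = (1 + u r) ^ p - 1 ∧ deriv ξ r = p * (1 + u r) ^ (p - 1) * deriv u r := by
  have hne (x : ℝ) (hx : x ∈ Set.Ici (0 : ℝ)) : 1 + x ≠ 0 := by
    have : 0 ≤ x := hx
    positivity
  obtain ⟨g, hg, hgf, hgf'⟩ := exists_contDiff_one_eqOn_Ici (a := 0)
    (f := fun x => (1 + x) ^ p - 1) (f' := fun x => p * (1 + x) ^ (p - 1))
    (fun x hx => by
      simpa using ((((hasDerivAt_id x).const_add 1).rpow_const (p := p)
        (Or.inl (hne x hx))).sub_const 1).hasDerivWithinAt)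
    (continuousOn_const.mul
      (ContinuousOn.rpow_const (by fun_prop) fun x hx => Or.inl (hne x hx)))
  refine ⟨g ∘ u, hg.comp hu, fun r hr => ⟨hgf (hu0 r hr), ?_⟩⟩
  rw [deriv_comp r (hg.differentiable one_ne_zero _) (hu.differentiable one_ne_zero _),
    hgf' (hu0 r hr)]

section TestFunctions

variable {w u : ℝ → ℝ} {c R : ℝ}

lemma RadialSemistable.mul_integral_rpow_sub_one_sq_le {g : ℝ → ℝ}
    (hstab : RadialSemistable w g c R) (hR : 0 ≤ R) (hu : ContDiff ℝ 1 u)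
    (hu0 : ∀ r ∈ Set.Icc 0 R, 0 ≤ u r) (huR : u R = 0) (s : ℝ) :
    c * ∫ r in 0..R, w r * g r * ((1 + u r) ^ s - 1) ^ 2 ≤
      s ^ 2 * ∫ r in 0..R, w r * ((1 + u r) ^ (2 * s - 2) * deriv u r ^ 2) := by
  rw [← Set.uIcc_of_le hR] at hu0
  obtain ⟨ξ, hξ, hξu⟩ := exists_contDiff_one_eq_one_add_rpow_sub_one s hu hu0
  have hξR : ξ R = 0 := by simp [(hξu R Set.right_mem_uIcc).1, huR]
  calc c * ∫ r in 0..R, w r * g r * ((1 + u r) ^ s - 1) ^ 2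
      = c * ∫ r in 0..R, w r * g r * ξ r ^ 2 := by
        congr 1
        exact integral_congr fun r hr => by simp only [(hξu r hr).1]
    _ ≤ ∫ r in 0..R, w r * deriv ξ r ^ 2 := hstab ξ hξ hξR
    _ = s ^ 2 * ∫ r in 0..R, w r * ((1 + u r) ^ (2 * s - 2) * deriv u r ^ 2) := by
        rw [← intervalIntegral.integral_const_mul]
        refine integral_congr fun r hr => ?_
        have hv : 0 < 1 + u r := by linarith [hu0 r hr]
        simp only [(hξu r hr).2]
        rw [show 2 * s - 2 = (s - 1) + (s - 1) by ring, rpow_add hv]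
        ring

lemma RadialWeakSolution.mul_integral_rpow_mul_deriv_sq_eq {h : ℝ → ℝ}
    (hweak : RadialWeakSolution w h u c R) (hR : 0 ≤ R) (hu : ContDiff ℝ 1 u)
    (hu0 : ∀ r ∈ Set.Icc 0 R, 0 ≤ u r) (huR : u R = 0) (p : ℝ) :
    p * ∫ r in 0..R, w r * ((1 + u r) ^ (p - 1) * deriv u r ^ 2) =
      c * ∫ r in 0..R, w r * h r * ((1 + u r) ^ p - 1) := by
  rw [← Set.uIcc_of_le hR] at hu0
  obtain ⟨φ, hφ, hφu⟩ := exists_contDiff_one_eq_one_add_rpow_sub_one p hu hu0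
  have hφR : φ R = 0 := by simp [(hφu R Set.right_mem_uIcc).1, huR]
  calc p * ∫ r in 0..R, w r * ((1 + u r) ^ (p - 1) * deriv u r ^ 2)
      = ∫ r in 0..R, w r * deriv u r * deriv φ r := by
        rw [← intervalIntegral.integral_const_mul]
        refine integral_congr fun r hr => ?_
        simp only [(hφu r hr).2]
        ring
    _ = c * ∫ r in 0..R, w r * h r * φ r := hweak φ hφ hφR
    _ = c * ∫ r in 0..R, w r * h r * ((1 + u r) ^ p - 1) := by
        congr 1
        exact integral_congr fun r hr => by simp only [(hφu r hr).1]

end TestFunctions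

lemma mul_rpow_sub_le_young {x C q s : ℝ} (hx : 0 ≤ x) (hC : 0 ≤ C) (hs : 0 < s) (hsq : s ≤ q) :
    C * x ^ (q - s) ≤ (1 - s / q) * x ^ q + s / q * C ^ (q / s) := by
  have hq : 0 < q := hs.trans_le hsq
  have hsq1 : s / q ≤ 1 := (div_le_one hq).2 hsq
  calc C * x ^ (q - s) = (x ^ q) ^ (1 - s / q) * (C ^ (q / s)) ^ (s / q) := by
        rw [← rpow_mul hx, ← rpow_mul hC, div_mul_div_cancel₀ hs.ne', div_self hq.ne', rpow_one,
          mul_one_sub, mul_div_cancel₀ _ hq.ne', mul_comm]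
    _ ≤ (1 - s / q) * x ^ q + s / q * C ^ (q / s) :=
        geom_mean_le_arith_mean2_weighted (by linarith) (by positivity) (by positivity)
          (by positivity) (by ring)

lemma integral_mul_rpow_le_of_le_mul_integral_mul_rpow_sub {α : Type*} [MeasurableSpace α]
    {μ : Measure α} {w f : α → ℝ} {q s C : ℝ} (hw0 : 0 ≤ᵐ[μ] w) (hf0 : 0 ≤ᵐ[μ] f)
    (hw : Integrable w μ) (hwf : Integrable (fun x => w x * f x ^ q) μ)
    (hC : 0 ≤ C) (hs : 0 < s) (hsq : s ≤ q)
    (hrev : ∫ x, w x * f x ^ q ∂μ ≤ C * ∫ x, w x * f x ^ (q - s) ∂μ) :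
    ∫ x, w x * f x ^ q ∂μ ≤ C ^ (q / s) * ∫ x, w x ∂μ := by
  have hyoung : C * ∫ x, w x * f x ^ (q - s) ∂μ ≤
      (1 - s / q) * ∫ x, w x * f x ^ q ∂μ + s / q * C ^ (q / s) * ∫ x, w x ∂μ := by
    simp only [← MeasureTheory.integral_const_mul]
    rw [← MeasureTheory.integral_add (hwf.const_mul _) (hw.const_mul _)]
    refine integral_mono_of_nonneg ?_ ((hwf.const_mul _).add (hw.const_mul _)) ?_
    · filter_upwards [hw0, hf0] with x hwx hfx
      exact mul_nonneg hC (mul_nonneg hwx (rpow_nonneg hfx _))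
    · filter_upwards [hw0, hf0] with x hwx hfx
      have := mul_le_mul_of_nonneg_left (mul_rpow_sub_le_young hfx hC hs hsq) hwx
      linear_combination this
  have hratio : 0 < s / q := div_pos hs (hs.trans_le hsq)
  refine le_of_mul_le_mul_left ?_ hratio
  linarith

lemma const_rpow_mul_integral_le_integral_mul_rpow {w f : ℝ → ℝ} {R ρ c q : ℝ}
    (hρ : ρ ∈ Set.Icc 0 R) (hw0 : ∀ r ∈ Set.Icc 0 R, 0 ≤ w r) (hf0 : ∀ r ∈ Set.Icc 0 R, 0 ≤ f r)
    (hw : IntervalIntegrable w volume 0 R)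
    (hwf : IntervalIntegrable (fun r => w r * f r ^ q) volume 0 R)
    (hq : 0 ≤ q) (hc : 0 ≤ c) (hcf : ∀ r ∈ Set.Icc 0 ρ, c ≤ f r) :
    c ^ q * ∫ r in 0..ρ, w r ≤ ∫ r in 0..R, w r * f r ^ q := by
  have hsub : Set.Icc 0 ρ ⊆ Set.Icc 0 R := Set.Icc_subset_Icc_right hρ.2
  have huIcc : Set.uIcc 0 ρ ⊆ Set.uIcc 0 R := by
    rwa [Set.uIcc_of_le hρ.1, Set.uIcc_of_le (hρ.1.trans hρ.2)]
  calc c ^ q * ∫ r in 0..ρ, w r = ∫ r in 0..ρ, c ^ q * w r :=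
        (intervalIntegral.integral_const_mul _ _).symm
    _ ≤ ∫ r in 0..ρ, w r * f r ^ q := by
        refine integral_mono_on hρ.1 ((hw.mono_set huIcc).const_mul _) (hwf.mono_set huIcc)
          fun r hr => ?_
        rw [mul_comm]
        exact mul_le_mul_of_nonneg_left (rpow_le_rpow hc (hcf r hr) hq) (hw0 r (hsub hr))
    _ ≤ ∫ r in 0..R, w r * f r ^ q := by
        refine integral_mono_interval le_rfl hρ.1 hρ.2 ?_ hwf
        filter_upwards [ae_restrict_mem measurableSet_Ioc] with r hr
        have hr' := Set.Ioc_subset_Icc_self hr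
        exact mul_nonneg (hw0 r hr') (rpow_nonneg (hf0 r hr') q)

section Exponents

variable {m s : ℝ}

lemma half_lt_and_sq_lt_of_mem_window (hm : 1 < m) (hlo : m - √(m * (m - 1)) < s)
    (hhi : s < m + √(m * (m - 1))) : 1 / 2 < s ∧ s ^ 2 < m * (2 * s - 1) := by
  have hdist : (s - m) ^ 2 < m * (m - 1) := by
    have habs : |s - m| < √(m * (m - 1)) := abs_lt.2 ⟨by linarith, by linarith⟩
    simpa only [sq_abs] using (lt_sqrt (abs_nonneg _)).1 habs
  have hsq : s ^ 2 < m * (2 * s - 1) := by linarith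
  have hpos : 0 < m * (2 * s - 1) := (sq_nonneg s).trans_lt hsq
  have hfactor : 0 < 2 * s - 1 := (pos_iff_pos_of_mul_pos hpos).1 (by linarith)
  exact ⟨by linarith, hsq⟩

lemma one_lt_of_sq_lt (hs : 1 / 2 < s) (hms : s ^ 2 < m * (2 * s - 1)) : 1 < m := by
  have hpos : 0 < 2 * s - 1 := by linarith
  have hsq : 1 * (2 * s - 1) ≤ s ^ 2 := by linarith [sq_nonneg (s - 1)]
  exact lt_of_mul_lt_mul_right (hsq.trans_lt hms) hpos.le

/-- The factor in the reverse Hölder inequality between the exponents `2 * s + m - 1` and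
`s + m - 1`. Its denominator is positive exactly when `|s - m| < √(m * (m - 1))` (for `1 ≤ m`);
where the denominator vanishes, the value is the junk value `0`. -/
noncomputable def reverseHolderConst (m s : ℝ) : ℝ :=
  2 * m * (2 * s - 1) / (m * (2 * s - 1) - s ^ 2)

lemma reverseHolderConst_nonneg (hms : s ^ 2 < m * (2 * s - 1)) : 0 ≤ reverseHolderConst m s :=
  div_nonneg (by linarith [sq_nonneg s]) (by linarith)

lemma sub_mul_rpow_le_energy_integrand {x : ℝ} (hx : 0 < x) (hM : 0 ≤ m * (2 * s - 1)) :
    (m * (2 * s - 1) - s ^ 2) * x ^ (2 * s + m - 1) -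
        2 * m * (2 * s - 1) * x ^ (2 * s + m - 1 - s) ≤
      m * (2 * s - 1) * (x ^ (m - 1) * (x ^ s - 1) ^ 2) -
        s ^ 2 * (x ^ m * (x ^ (2 * s - 1) - 1)) := by
  have hsq : x ^ (m - 1) * (x ^ s) ^ 2 = x ^ (2 * s + m - 1) := by
    rw [sq, ← rpow_add hx, ← rpow_add hx]
    ring_nf
  have hlin : x ^ (m - 1) * x ^ s = x ^ (2 * s + m - 1 - s) := by
    rw [← rpow_add hx]
    ring_nf
  have hsource : x ^ m * x ^ (2 * s - 1) = x ^ (2 * s + m - 1) := by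
    rw [← rpow_add hx]
    ring_nf
  have hdropped : 0 ≤ m * (2 * s - 1) * x ^ (m - 1) + s ^ 2 * x ^ m := by positivity
  linear_combination hdropped - m * (2 * s - 1) * hsq + 2 * m * (2 * s - 1) * hlin +
    s ^ 2 * hsource

end Exponents

section PowerNonlinearity

variable {w u : ℝ → ℝ} {R lam m s : ℝ}

lemma RadialSemistable.integral_energy_le
    (hstab : RadialSemistable w (fun r => (1 + u r) ^ (m - 1)) (lam * m) R)
    (hlam : 0 < lam) (hs : 1 / 2 ≤ s) (hR : 0 ≤ R)
    (hu : ContDiff ℝ 1 u) (hu0 : ∀ r ∈ Set.Icc 0 R, 0 ≤ u r) (huR : u R = 0)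
    (hweak : RadialWeakSolution w (fun r => (1 + u r) ^ m) u lam R) :
    m * (2 * s - 1) * ∫ r in 0..R, w r * (1 + u r) ^ (m - 1) * ((1 + u r) ^ s - 1) ^ 2 ≤
      s ^ 2 * ∫ r in 0..R, w r * (1 + u r) ^ m * ((1 + u r) ^ (2 * s - 1) - 1) := by
  have hstable := hstab.mul_integral_rpow_sub_one_sq_le hR hu hu0 huR s
  have hequation := hweak.mul_integral_rpow_mul_deriv_sq_eq hR hu hu0 huR (2 * s - 1)
  rw [show 2 * s - 1 - 1 = 2 * s - 2 by ring] at hequation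
  have hs' : 0 ≤ 2 * s - 1 := by linarith
  refine le_of_mul_le_mul_left ?_ hlam
  linear_combination (2 * s - 1) * hstable + s ^ 2 * hequation

lemma continuousOn_one_add_rpow {S : Set ℝ} (hu : ContinuousOn u S) (hu0 : ∀ r ∈ S, 0 ≤ u r)
    (p : ℝ) : ContinuousOn (fun r => (1 + u r) ^ p) S := by
  refine ContinuousOn.rpow_const (by fun_prop) fun r hr => Or.inl ?_
  linarith [hu0 r hr]

lemma intervalIntegrable_mul_one_add_rpow (hR : 0 ≤ R) (hw : IntervalIntegrable w volume 0 R)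
    (hu : ContinuousOn u (Set.Icc 0 R)) (hu0 : ∀ r ∈ Set.Icc 0 R, 0 ≤ u r) (p : ℝ) :
    IntervalIntegrable (fun r => w r * (1 + u r) ^ p) volume 0 R := by
  rw [← Set.uIcc_of_le hR] at hu hu0
  exact hw.mul_continuousOn (continuousOn_one_add_rpow hu hu0 p)

lemma RadialSemistable.integral_rpow_le_mul_integral_rpow_sub
    (hstab : RadialSemistable w (fun r => (1 + u r) ^ (m - 1)) (lam * m) R)
    (hlam : 0 < lam) (hs : 1 / 2 < s) (hms : s ^ 2 < m * (2 * s - 1)) (hR : 0 ≤ R)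
    (hw : IntervalIntegrable w volume 0 R) (hw0 : ∀ r ∈ Set.Icc 0 R, 0 ≤ w r)
    (hu : ContDiff ℝ 1 u) (hu0 : ∀ r ∈ Set.Icc 0 R, 0 ≤ u r) (huR : u R = 0)
    (hweak : RadialWeakSolution w (fun r => (1 + u r) ^ m) u lam R) :
    ∫ r in 0..R, w r * (1 + u r) ^ (2 * s + m - 1) ≤
      reverseHolderConst m s * ∫ r in 0..R, w r * (1 + u r) ^ (2 * s + m - 1 - s) := by
  have hvInt := intervalIntegrable_mul_one_add_rpow hR hw hu.continuous.continuousOn hu0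
  have hcont (p : ℝ) : ContinuousOn (fun r => (1 + u r) ^ p) (Set.uIcc 0 R) :=
    continuousOn_one_add_rpow hu.continuous.continuousOn (by rwa [Set.uIcc_of_le hR]) p
  have hintStab : IntervalIntegrable
      (fun r => w r * (1 + u r) ^ (m - 1) * ((1 + u r) ^ s - 1) ^ 2) volume 0 R :=
    (hvInt (m - 1)).mul_continuousOn (((hcont s).sub continuousOn_const).pow 2)
  have hintSource : IntervalIntegrable
      (fun r => w r * (1 + u r) ^ m * ((1 + u r) ^ (2 * s - 1) - 1)) volume 0 R :=
    (hvInt m).mul_continuousOn ((hcont (2 * s - 1)).sub continuousOn_const)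
  have henergy := hstab.integral_energy_le hlam hs.le hR hu hu0 huR hweak
  have hmono := integral_mono_on hR
    (((hvInt (2 * s + m - 1)).const_mul (m * (2 * s - 1) - s ^ 2)).sub
      ((hvInt (2 * s + m - 1 - s)).const_mul (2 * m * (2 * s - 1))))
    ((hintStab.const_mul (m * (2 * s - 1))).sub (hintSource.const_mul (s ^ 2)))
    fun r hr => by
      have hpoint := sub_mul_rpow_le_energy_integrand (m := m) (s := s) (x := 1 + u r)
        (by linarith [hu0 r hr]) ((sq_nonneg s).trans hms.le)
      linear_combination mul_le_mul_of_nonneg_left hpoint (hw0 r hr)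
  rw [intervalIntegral.integral_sub ((hvInt _).const_mul _) ((hvInt _).const_mul _),
    intervalIntegral.integral_sub (hintStab.const_mul _) (hintSource.const_mul _)] at hmono
  simp only [intervalIntegral.integral_const_mul] at hmono
  rw [reverseHolderConst, div_mul_eq_mul_div, le_div_iff₀ (by linarith)]
  linarith

theorem RadialSemistable.integral_mul_one_add_rpow_le
    (hstab : RadialSemistable w (fun r => (1 + u r) ^ (m - 1)) (lam * m) R)
    (hlam : 0 < lam) (hs : 1 / 2 < s) (hms : s ^ 2 < m * (2 * s - 1)) (hR : 0 ≤ R)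
    (hw : IntervalIntegrable w volume 0 R) (hw0 : ∀ r ∈ Set.Icc 0 R, 0 ≤ w r)
    (hu : ContDiff ℝ 1 u) (hu0 : ∀ r ∈ Set.Icc 0 R, 0 ≤ u r) (huR : u R = 0)
    (hweak : RadialWeakSolution w (fun r => (1 + u r) ^ m) u lam R) :
    ∫ r in 0..R, w r * (1 + u r) ^ (2 * s + m - 1) ≤
      reverseHolderConst m s ^ ((2 * s + m - 1) / s) * ∫ r in 0..R, w r := by
  have hm : 1 < m := one_lt_of_sq_lt hs hms
  have hrev := hstab.integral_rpow_le_mul_integral_rpow_sub hlam hs hms hR hw hw0 hu hu0 huR hweak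
  have hvInt := intervalIntegrable_mul_one_add_rpow hR hw hu.continuous.continuousOn hu0
    (2 * s + m - 1)
  have hC : 0 ≤ reverseHolderConst m s := reverseHolderConst_nonneg hms
  rw [intervalIntegrable_iff_integrableOn_Ioc_of_le hR] at hw hvInt
  simp only [integral_of_le hR] at hrev ⊢
  refine integral_mul_rpow_le_of_le_mul_integral_mul_rpow_sub ?_ ?_ hw hvInt hC (by linarith)
    (by linarith) hrev
  all_goals
    filter_upwards [ae_restrict_mem measurableSet_Ioc] with r hr
    have hr' := Set.Ioc_subset_Icc_self hr
  · exact hw0 r hr'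
  · exact add_nonneg zero_le_one (hu0 r hr')

theorem radial_power_Linfty_bound_general {ρ D : ℝ} (hlam : 0 < lam) (hs : 1 / 2 < s)
    (hms : s ^ 2 < m * (2 * s - 1)) (hρ : ρ ∈ Set.Icc 0 R)
    (hw : IntervalIntegrable w volume 0 R) (hw0 : ∀ r ∈ Set.Icc 0 R, 0 ≤ w r)
    (hwρ : 0 < ∫ r in 0..ρ, w r)
    (hu : ContDiff ℝ 1 u) (hu0 : ∀ r ∈ Set.Icc 0 R, 0 ≤ u r) (huR : u R = 0)
    (hstab : RadialSemistable w (fun r => (1 + u r) ^ (m - 1)) (lam * m) R)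
    (hweak : RadialWeakSolution w (fun r => (1 + u r) ^ m) u lam R)
    (hosc : ∀ r ∈ Set.Icc 0 ρ, u 0 - u r ≤ D) :
    u 0 ≤ D - 1 + reverseHolderConst m s ^ (1 / s) *
      ((∫ r in 0..R, w r) / ∫ r in 0..ρ, w r) ^ (1 / (2 * s + m - 1)) := by
  have hR : 0 ≤ R := hρ.1.trans hρ.2
  have hm : 1 < m := one_lt_of_sq_lt hs hms
  have hbound := hstab.integral_mul_one_add_rpow_le hlam hs hms hR hw hw0 hu hu0 huR hweak
  have hvInt := intervalIntegrable_mul_one_add_rpow hR hw hu.continuous.continuousOn hu0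
  have hWR : 0 ≤ ∫ r in 0..R, w r := integral_nonneg hR hw0
  have hC : 0 ≤ reverseHolderConst m s := reverseHolderConst_nonneg hms
  set C := reverseHolderConst m s
  set q := 2 * s + m - 1
  have hq : 0 < q := by simp only [q]; linarith
  suffices 1 + u 0 - D ≤ C ^ (1 / s) * ((∫ r in 0..R, w r) / ∫ r in 0..ρ, w r) ^ (1 / q) by
    linarith
  rcases le_total (1 + u 0 - D) 0 with hneg | hpos
  · exact hneg.trans (by positivity)
  have hlower := const_rpow_mul_integral_le_integral_mul_rpow hρ hw0
    (fun r hr => add_nonneg zero_le_one (hu0 r hr)) hw (hvInt q) hq.le hpos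
    (fun r hr => by linarith [hosc r hr])
  rw [← rpow_le_rpow_iff hpos (by positivity) hq]
  calc (1 + u 0 - D) ^ q
      ≤ C ^ (q / s) * ((∫ r in 0..R, w r) / ∫ r in 0..ρ, w r) := by
        rw [← mul_div_assoc, le_div_iff₀ hwρ]
        exact hlower.trans hbound
    _ = (C ^ (1 / s) * ((∫ r in 0..R, w r) / ∫ r in 0..ρ, w r) ^ (1 / q)) ^ q := by
        rw [mul_rpow (by positivity) (by positivity), ← rpow_mul hC, ← rpow_mul (by positivity),
          one_div_mul_cancel hq.ne', rpow_one, one_div_mul_eq_div]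

end PowerNonlinearity

theorem radial_power_Linfty_bound
    (N : ℕ) (hN : 1 ≤ N) (R : ℝ) (hR : 0 < R)
    (a ψ : ℝ → ℝ) (ha : ContinuousOn a (Set.Icc 0 R))
    (hψ : ContinuousOn ψ (Set.Icc 0 R)) (hψ0 : ∀ r ∈ Set.Icc (0:ℝ) R, 0 ≤ ψ r)
    (w : ℝ → ℝ) (hw : ∀ r, w r = exp (a r) * ψ r ^ (N - 1))
    (hwint : 0 < ∫ r in (0:ℝ)..R, w r)
    (lam m b t : ℝ) (hlam : 0 < lam) (hm : 1 < m) (hb : 0 < b) (ht : 0 < t)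
    (hbt1 : m - Real.sqrt (m*(m-1)) < b*t) (hbt2 : b*t < m + Real.sqrt (m*(m-1)))
    (u : ℝ → ℝ) (hu : ContDiff ℝ 1 u) (hmono : AntitoneOn u (Set.Icc 0 R))
    (hu0 : ∀ r ∈ Set.Icc (0:ℝ) R, 0 ≤ u r) (huR : u R = 0)
    (hstab : ∀ ξ : ℝ → ℝ, ContDiff ℝ 1 ξ → ξ R = 0 →
      ∫ r in (0:ℝ)..R, w r * (deriv ξ r)^2 ≥
        lam * m * ∫ r in (0:ℝ)..R, w r * (1 + u r) ^ (m-1) * (ξ r)^2)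
    (hweak : ∀ φ : ℝ → ℝ, ContDiff ℝ 1 φ → φ R = 0 →
      ∫ r in (0:ℝ)..R, w r * deriv u r * deriv φ r =
        lam * ∫ r in (0:ℝ)..R, w r * (1 + u r) ^ m * φ r)
    (K : ℝ) (hK : 0 ≤ K) (hosc : ∀ r ∈ Set.Icc (0:ℝ) R, u 0 - u r ≤ K * r) :
    sSup (u '' Set.Icc 0 R) = u 0 ∧
      u 0 ≤ K * R - 1 +
        (2*m*(2*b*t - 1)/(m*(2*b*t - 1) - b^2*t^2)) ^ (1/(b*t)) := by
  obtain ⟨hs, hms⟩ := half_lt_and_sq_lt_of_mem_window hm hbt1 hbt2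
  have hw0 : ∀ r ∈ Set.Icc 0 R, 0 ≤ w r := fun r hr => by
    rw [hw]
    exact mul_nonneg (exp_pos _).le (pow_nonneg (hψ0 r hr) _)
  have hwc : ContinuousOn w (Set.Icc 0 R) := by
    rw [funext hw]
    exact ha.rexp.mul (hψ.pow _)
  have hosc' : ∀ r ∈ Set.Icc 0 R, u 0 - u r ≤ K * R := fun r hr =>
    (hosc r hr).trans (mul_le_mul_of_nonneg_left hr.2 hK)
  refine ⟨(hmono.map_isLeast (isLeast_Icc hR.le)).csSup_eq, ?_⟩
  have hbound := radial_power_Linfty_bound_general hlam hs hms (Set.right_mem_Icc.2 hR.le)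
    (hwc.intervalIntegrable_of_Icc hR.le) hw0 hwint hu hu0 huR hstab hweak hosc'
  rwa [div_self hwint.ne', one_rpow, mul_one, reverseHolderConst, mul_pow,
    ← mul_assoc 2 b t] at hbound
end

section
/- Fix real numbers ε ∈ (0,1) and p > 1, and define g_ε : ℝ → ℝ by g_ε(s) = (1−s)^{−2} for s < 1−ε and g_ε(s) = 1/ε² − 2(1−ε)/(pε³) + 2s^p/(pε³(1−ε)^{p−1}) for s ≥ 1−ε, and let G_ε(s) = ∫_{−∞}^{s} g_ε(σ) dσ (this integral converges for every s, with G_ε(s) = (1−s)^{−1} for s ≤ 1−ε). Then for every θ with 2 < θ < p+1 there exists M > 0 such that θ·G_ε(s) ≤ s·g_ε(s) for all s ≥ M. -/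
open MeasureTheory Real

/-! If `g s / s ^ p → K`, integrating the two bounds `(K ± δ) s ^ p` for `g` gives
`G s / s ^ (p + 1) → K / (p + 1)`, whatever `g` does on bounded intervals. Hence
`(s * g s - θ * G s) / s ^ (p + 1) → K * (1 - θ / (p + 1))`, which is positive for `K > 0` and
`θ < p + 1`. The truncated nonlinearity has such a limit with `K = 2 / (p ε³ (1 - ε) ^ (p - 1))`. -/

open Filter Set Topology

section PowerGrowth

variable {f : ℝ → ℝ} {p K L c θ : ℝ}

theorem integral_Iic_le_add_of_le_mul_rpow {a s : ℝ} (hp : -1 < p) (has : a ≤ s)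
    (hf : IntegrableOn f (Iic s)) (hle : ∀ x ∈ Icc a s, f x ≤ L * x ^ p) :
    ∫ x in Iic s, f x ≤
      (∫ x in Iic a, f x) + L * ((s ^ (p + 1) - a ^ (p + 1)) / (p + 1)) := by
  have hf_Iic_a : IntegrableOn f (Iic a) := hf.mono_set (Iic_subset_Iic.2 has)
  have hf_Icc : IntervalIntegrable f volume a s :=
    (intervalIntegrable_iff_integrableOn_Ioc_of_le has).2 (hf.mono_set Ioc_subset_Iic_self)
  have hpow : IntervalIntegrable (fun x : ℝ ↦ L * x ^ p) volume a s :=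
    (intervalIntegral.intervalIntegrable_rpow' hp).const_mul L
  calc ∫ x in Iic s, f x
      = (∫ x in Iic a, f x) + ∫ x in a..s, f x := by
        rw [← intervalIntegral.integral_Iic_sub_Iic hf_Iic_a hf]; ring
    _ ≤ (∫ x in Iic a, f x) + ∫ x in a..s, L * x ^ p := by
        gcongr
        exact intervalIntegral.integral_mono_on has hf_Icc hpow hle
    _ = (∫ x in Iic a, f x) + L * ((s ^ (p + 1) - a ^ (p + 1)) / (p + 1)) := by
        rw [intervalIntegral.integral_const_mul, integral_rpow (Or.inl hp)]

theorem eventually_integral_Iic_lt_mul_rpow (hp : -1 < p) (hf : ∀ s, IntegrableOn f (Iic s))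
    (hle : ∀ᶠ s in atTop, f s ≤ L * s ^ p) (hc : L / (p + 1) < c) :
    ∀ᶠ s in atTop, ∫ x in Iic s, f x < c * s ^ (p + 1) := by
  obtain ⟨a, ha⟩ := eventually_atTop.1 hle
  have hpow : Tendsto (fun s : ℝ ↦ (c - L / (p + 1)) * s ^ (p + 1)) atTop atTop :=
    (tendsto_rpow_atTop (by linarith)).const_mul_atTop (sub_pos.2 hc)
  filter_upwards [eventually_ge_atTop a,
    hpow.eventually_gt_atTop ((∫ x in Iic a, f x) - L * (a ^ (p + 1) / (p + 1)))]
    with s has hs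
  calc ∫ x in Iic s, f x
      ≤ (∫ x in Iic a, f x) + L * ((s ^ (p + 1) - a ^ (p + 1)) / (p + 1)) :=
        integral_Iic_le_add_of_le_mul_rpow hp has (hf s) fun x hx ↦ ha x hx.1
    _ = (∫ x in Iic a, f x) - L * (a ^ (p + 1) / (p + 1)) + L / (p + 1) * s ^ (p + 1) := by ring
    _ < (c - L / (p + 1)) * s ^ (p + 1) + L / (p + 1) * s ^ (p + 1) := by gcongr
    _ = c * s ^ (p + 1) := by ring

theorem eventually_integral_Iic_div_rpow_lt (hp : -1 < p) (hf : ∀ s, IntegrableOn f (Iic s))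
    (hlim : Tendsto (fun s ↦ f s / s ^ p) atTop (𝓝 K)) (hc : K / (p + 1) < c) :
    ∀ᶠ s in atTop, (∫ x in Iic s, f x) / s ^ (p + 1) < c := by
  have hp1 : 0 < p + 1 := by linarith
  obtain ⟨L, hKL, hLc⟩ := exists_between ((div_lt_iff₀ hp1).1 hc)
  have hle : ∀ᶠ s in atTop, f s ≤ L * s ^ p := by
    filter_upwards [hlim.eventually_lt_const hKL, eventually_gt_atTop 0] with s hs hs0
    exact ((div_lt_iff₀ (rpow_pos_of_pos hs0 p)).1 hs).le
  filter_upwards [eventually_integral_Iic_lt_mul_rpow hp hf hle ((div_lt_iff₀ hp1).2 hLc),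
    eventually_gt_atTop 0] with s hs hs0
  exact (div_lt_iff₀ (rpow_pos_of_pos hs0 _)).2 hs

theorem tendsto_integral_Iic_div_rpow (hp : -1 < p) (hf : ∀ s, IntegrableOn f (Iic s))
    (hlim : Tendsto (fun s ↦ f s / s ^ p) atTop (𝓝 K)) :
    Tendsto (fun s ↦ (∫ x in Iic s, f x) / s ^ (p + 1)) atTop (𝓝 (K / (p + 1))) := by
  refine tendsto_order.2 ⟨fun c hc ↦ ?_,
    fun c hc ↦ eventually_integral_Iic_div_rpow_lt hp hf hlim hc⟩
  have hlim_neg : Tendsto (fun s ↦ -f s / s ^ p) atTop (𝓝 (-K)) := by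
    simpa only [neg_div] using hlim.neg
  have hc_neg : -K / (p + 1) < -c := by rwa [neg_div, neg_lt_neg_iff]
  filter_upwards [eventually_integral_Iic_div_rpow_lt (f := fun x ↦ -f x) hp
    (fun s ↦ (hf s).neg) hlim_neg hc_neg] with s hs
  rwa [integral_neg, neg_div, neg_lt_neg_iff] at hs

theorem eventually_mul_integral_Iic_le_of_tendsto_div_rpow (hp : -1 < p)
    (hf : ∀ s, IntegrableOn f (Iic s)) (hK : 0 < K)
    (hlim : Tendsto (fun s ↦ f s / s ^ p) atTop (𝓝 K)) (hθ : θ < p + 1) :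
    ∀ᶠ s in atTop, θ * ∫ x in Iic s, f x ≤ s * f s := by
  have hlt : θ * (K / (p + 1)) < K := by
    rw [mul_div_left_comm]
    exact mul_lt_of_lt_one_right hK ((div_lt_one (by linarith)).2 hθ)
  filter_upwards [((tendsto_integral_Iic_div_rpow hp hf hlim).const_mul θ).eventually_lt hlim hlt,
    eventually_gt_atTop 0] with s hs hs0
  have hsp : 0 < s ^ p := rpow_pos_of_pos hs0 p
  rw [rpow_add_one hs0.ne', ← mul_div_assoc, div_lt_div_iff₀ (by positivity) hsp] at hs
  exact (lt_of_mul_lt_mul_right (hs.trans_eq (by ring)) hsp.le).le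

end PowerGrowth

theorem integrableOn_Iio_const_sub_rpow {r b c : ℝ} (hr : r < -1) (hbc : b < c) :
    IntegrableOn (fun x ↦ (c - x) ^ r) (Iio b) := by
  have hreflect := (integrableOn_Ioi_rpow_of_lt hr (sub_pos.2 hbc)).integrable_indicator
    measurableSet_Ioi |>.comp_sub_left c
  refine (integrable_indicator_iff measurableSet_Iio).1 (hreflect.congr (.of_forall fun x ↦ ?_))
  simp only [indicator_apply, mem_Ioi, mem_Iio, sub_lt_sub_iff_left]

/-- The regularized MEMS nonlinearity `g_ε`: the singular `(1 - s)⁻²` below `1 - ε`, continued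
from there on by the multiple of `s ^ p` plus constant that matches value and slope at `1 - ε`. -/
noncomputable def truncatedMems (ε p s : ℝ) : ℝ :=
  if s < 1 - ε then (1 - s) ^ (-(2 : ℝ))
  else 1 / ε ^ 2 - 2 * (1 - ε) / (p * ε ^ 3) + 2 * s ^ p / (p * ε ^ 3 * (1 - ε) ^ (p - 1))

namespace truncatedMems

variable {ε p : ℝ}

theorem integrableOn_Iic (hε : 0 < ε) (hp : 0 ≤ p) (s : ℝ) :
    IntegrableOn (truncatedMems ε p) (Iic s) := by
  have hsing : IntegrableOn (truncatedMems ε p) (Iio (1 - ε)) :=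
    (integrableOn_Iio_const_sub_rpow (by norm_num) (sub_lt_self 1 hε)).congr_fun
      (fun _ hx ↦ (if_pos hx).symm) measurableSet_Iio
  have hpow : IntegrableOn (truncatedMems ε p) (Icc (1 - ε) s) := by
    have hcont : Continuous fun x : ℝ ↦
        1 / ε ^ 2 - 2 * (1 - ε) / (p * ε ^ 3) + 2 * x ^ p / (p * ε ^ 3 * (1 - ε) ^ (p - 1)) := by
      have := continuous_rpow_const hp
      fun_prop
    exact hcont.integrableOn_Icc.congr_fun
      (fun _ hx ↦ (if_neg hx.1.not_gt).symm) measurableSet_Icc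
  refine (hsing.union hpow).mono_set fun x hx ↦ ?_
  exact (lt_or_ge x (1 - ε)).imp id fun hεx ↦ ⟨hεx, hx⟩

theorem tendsto_div_rpow (ε : ℝ) (hp : 0 < p) :
    Tendsto (fun s ↦ truncatedMems ε p s / s ^ p) atTop
      (𝓝 (2 / (p * ε ^ 3 * (1 - ε) ^ (p - 1)))) := by
  have hconst : Tendsto (fun s : ℝ ↦ (1 / ε ^ 2 - 2 * (1 - ε) / (p * ε ^ 3)) / s ^ p) atTop (𝓝 0) :=
    (tendsto_rpow_atTop hp).const_div_atTop _
  rw [← zero_add (2 / _)]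
  refine (hconst.add_const _).congr' ?_
  filter_upwards [eventually_ge_atTop (1 - ε), eventually_gt_atTop 0] with s hεs hs0
  have hsp : s ^ p ≠ 0 := (rpow_pos_of_pos hs0 p).ne'
  rw [truncatedMems, if_neg hεs.not_gt, add_div, div_right_comm (2 * s ^ p),
    mul_div_cancel_right₀ _ hsp]

end truncatedMems

theorem truncated_mems_ambrosetti_rabinowitz_general {ε p θ : ℝ} (hε : 0 < ε) (hε1 : ε < 1)
    (hp : 0 < p) (hθ : θ < p + 1) :
    ∃ M > 0, ∀ s ≥ M, θ * ∫ σ in Iic s, truncatedMems ε p σ ≤ s * truncatedMems ε p s := by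
  have hK : 0 < 2 / (p * ε ^ 3 * (1 - ε) ^ (p - 1)) := by
    have : 0 < 1 - ε := sub_pos.2 hε1
    positivity
  have hAR := eventually_mul_integral_Iic_le_of_tendsto_div_rpow (by linarith)
    (truncatedMems.integrableOn_Iic hε hp.le) hK
    (truncatedMems.tendsto_div_rpow ε hp) hθ
  obtain ⟨M, hM⟩ := eventually_atTop.1 hAR
  exact ⟨max M 1, by positivity, fun s hs ↦ hM s ((le_max_left M 1).trans hs)⟩

theorem truncated_mems_ambrosetti_rabinowitz
    (ε p : ℝ) (hε : 0 < ε) (hε1 : ε < 1) (hp : 1 < p)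
    (g G : ℝ → ℝ)
    (hg : ∀ s, g s = if s < 1 - ε then (1 - s) ^ (-(2:ℝ))
      else 1/ε^2 - 2*(1-ε)/(p*ε^3) + 2*s^p/(p*ε^3*(1-ε)^(p-1)))
    (hG : ∀ s, G s = ∫ σ in Set.Iic s, g σ) :
    ∀ θ : ℝ, 2 < θ → θ < p + 1 →
      ∃ M > 0, ∀ s ≥ M, θ * G s ≤ s * g s := by
  obtain ⟨rfl, rfl⟩ : g = truncatedMems ε p ∧ G = _ := ⟨funext hg, funext hG⟩
  exact fun θ _ hθ ↦ truncated_mems_ambrosetti_rabinowitz_general hε hε1 (by linarith) hθ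
end
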